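/- Let r, s, t be positive integers with r ≤ s, s + r ≤ t, and t + s + r ≤ min{N₁, N₂}. Suppose the linear map 𝓐 : ℝ^{N₁×N₂} → ℝ^m satisfies the modified rank-restricted isometry property of order t + s + r with constants 0 < α ≤ β, and let γ ≥ 1 satisfy β/α ≤ γ. Let Z ∈ ℝ^{N₁×N₂} be a nonzero matrix with rank(Z) ≤ s + r, and let W be a best rank-t approximation of 𝓐*(sgn(𝓐(Z))). Then W ≠ 0 and (1/(4γ²))·‖𝓐(W)‖₁²/‖W‖_F² ≤ ‖W‖_F²; in particular, max{‖W‖_F², (1/(4γ²))·‖𝓐(W)‖₁²/‖W‖_F²} = ‖W‖_F². -/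

import Mathlib

noncomputable def frobNorm {N₁ N₂ : ℕ} (Z : Matrix (Fin N₁) (Fin N₂) ℝ) : ℝ :=
  Real.sqrt (∑ i, ∑ j, (Z i j) ^ 2)

def frobInner {N₁ N₂ : ℕ} (A B : Matrix (Fin N₁) (Fin N₂) ℝ) : ℝ :=
  ∑ i, ∑ j, A i j * B i j

def l1norm {m : ℕ} (v : Fin m → ℝ) : ℝ := ∑ i, |v i|

noncomputable def sgnVec {m : ℕ} (v : Fin m → ℝ) : Fin m → ℝ := fun i => Real.sign (v i)

def IsBestRankApprox {N₁ N₂ : ℕ} (k : ℕ) (Z H : Matrix (Fin N₁) (Fin N₂) ℝ) : Prop :=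
  H.rank ≤ k ∧
    ∀ W : Matrix (Fin N₁) (Fin N₂) ℝ, W.rank ≤ k → frobNorm (Z - H) ≤ frobNorm (Z - W)
lemma frobNorm_sq_eq {N₁ N₂ : ℕ} (Z : Matrix (Fin N₁) (Fin N₂) ℝ) :
    frobNorm Z ^ 2 = frobInner Z Z := by
  unfold frobNorm frobInner
  rw [Real.sq_sqrt (by positivity)]
  simp only [pow_two]

lemma frobInner_expand {N₁ N₂ : ℕ} (M X : Matrix (Fin N₁) (Fin N₂) ℝ) (c : ℝ) :
    frobInner (M - c • X) (M - c • X)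
      = frobInner M M - 2 * c * frobInner M X + c ^ 2 * frobInner X X := by
  unfold frobInner
  simp only [Finset.mul_sum, ← Finset.sum_add_distrib, ← Finset.sum_sub_distrib]
  refine Finset.sum_congr rfl fun i _ => Finset.sum_congr rfl fun j _ => ?_
  simp only [Matrix.sub_apply, Matrix.smul_apply, smul_eq_mul]
  ring

lemma frobNorm_pos_of_ne {N₁ N₂ : ℕ} {Z : Matrix (Fin N₁) (Fin N₂) ℝ} (h : Z ≠ 0) :
    0 < frobNorm Z := by
  unfold frobNorm
  apply Real.sqrt_pos.2
  by_contra hn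
  apply h
  have h0 : ∑ i, ∑ j, (Z i j) ^ 2 = 0 := le_antisymm (not_lt.1 hn) (by positivity)
  rw [Finset.sum_eq_zero_iff_of_nonneg (fun i _ => by positivity)] at h0
  ext i j
  have h1 := h0 i (Finset.mem_univ _)
  rw [Finset.sum_eq_zero_iff_of_nonneg (fun i _ => by positivity)] at h1
  simpa using h1 j (Finset.mem_univ _)

lemma rank_smul_le_aux {N₁ N₂ : ℕ} (X : Matrix (Fin N₁) (Fin N₂) ℝ) (c : ℝ) :
    (c • X).rank ≤ X.rank := by
  have h : c • X = X * (c • (1 : Matrix (Fin N₂) (Fin N₂) ℝ)) := by simp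
  rw [h]
  exact Matrix.rank_mul_le_left _ _

/-- Under the modified RIP of order t+s+r with ratio ≤ γ, if Z ≠ 0 has rank ≤ s+r and W
is a best rank-t approximation of 𝓐*(sgn(𝓐(Z))), then W ≠ 0 and
(1/(4γ²))·‖𝓐(W)‖₁²/‖W‖_F² ≤ ‖W‖_F²; in particular the maximum of the two equals ‖W‖_F². -/
theorem stmt12 {N₁ N₂ m : ℕ} (r s t : ℕ) (hr : 0 < r) (hs : 0 < s) (ht : 0 < t)
    (hrs : r ≤ s) (hst : s + r ≤ t) (hdim : t + s + r ≤ min N₁ N₂)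
    (A : Matrix (Fin N₁) (Fin N₂) ℝ →ₗ[ℝ] (Fin m → ℝ))
    (Astar : (Fin m → ℝ) →ₗ[ℝ] Matrix (Fin N₁) (Fin N₂) ℝ)
    (hadj : ∀ (u : Fin m → ℝ) (Z : Matrix (Fin N₁) (Fin N₂) ℝ),
      frobInner (Astar u) Z = ∑ i, u i * A Z i)
    (α β : ℝ) (hα : 0 < α) (hαβ : α ≤ β)
    (hRIP : ∀ Z : Matrix (Fin N₁) (Fin N₂) ℝ, Z.rank ≤ t + s + r →
      α * frobNorm Z ≤ l1norm (A Z) ∧ l1norm (A Z) ≤ β * frobNorm Z)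
    (γ : ℝ) (hγ : 1 ≤ γ) (hratio : β / α ≤ γ)
    (Z : Matrix (Fin N₁) (Fin N₂) ℝ) (hZ0 : Z ≠ 0) (hZ : Z.rank ≤ s + r)
    (W : Matrix (Fin N₁) (Fin N₂) ℝ)
    (hW : IsBestRankApprox t (Astar (sgnVec (A Z))) W) :
    W ≠ 0 ∧
      (1 / (4 * γ ^ 2)) * l1norm (A W) ^ 2 / frobNorm W ^ 2 ≤ frobNorm W ^ 2 ∧
      max (frobNorm W ^ 2) ((1 / (4 * γ ^ 2)) * l1norm (A W) ^ 2 / frobNorm W ^ 2)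
        = frobNorm W ^ 2 := by
  set M := Astar (sgnVec (A Z)) with hM
  have key : ∀ (X : Matrix (Fin N₁) (Fin N₂) ℝ), X.rank ≤ t → ∀ c : ℝ,
      - 2 * frobInner M W + frobInner W W
        ≤ - 2 * c * frobInner M X + c ^ 2 * frobInner X X := by
    intro X hX c
    have h1 := hW.2 (c • X) ((rank_smul_le_aux X c).trans hX)
    have h2 : frobNorm (M - W) ^ 2 ≤ frobNorm (M - c • X) ^ 2 :=
      pow_le_pow_left₀ (Real.sqrt_nonneg _) h1 2
    rw [frobNorm_sq_eq, frobNorm_sq_eq, frobInner_expand] at h2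
    have h3 := frobInner_expand M W 1
    rw [one_smul] at h3
    linarith
  have hMZ : frobInner M Z = l1norm (A Z) := by
    rw [hM, hadj]
    unfold l1norm sgnVec
    refine Finset.sum_congr rfl fun i _ => ?_
    rcases lt_trichotomy (A Z i) 0 with h | h | h
    · rw [Real.sign_of_neg h, abs_of_neg h]; ring
    · rw [h]; simp
    · rw [Real.sign_of_pos h, abs_of_pos h]; ring
  have hZp := frobNorm_pos_of_ne hZ0
  have hlow : α * frobNorm Z ≤ frobInner M Z := by
    rw [hMZ]; exact (hRIP Z (by omega)).1
  -- value at the optimal multiple of Z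
  have hkZ : - 2 * frobInner M W + frobInner W W ≤ - α ^ 2 := by
    have h := key Z (hZ.trans hst) (α / frobNorm Z)
    have h2 : α / frobNorm Z * (α * frobNorm Z) ≤ α / frobNorm Z * frobInner M Z :=
      mul_le_mul_of_nonneg_left hlow (by positivity)
    have h3 : α / frobNorm Z * (α * frobNorm Z) = α ^ 2 := by field_simp
    have h4 : (α / frobNorm Z) ^ 2 * frobInner Z Z = α ^ 2 := by
      rw [← frobNorm_sq_eq]; field_simp
    nlinarith
  have hW0 : W ≠ 0 := by
    intro h
    rw [h] at hkZ
    simp [frobInner] at hkZ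
    nlinarith
  have hWp := frobNorm_pos_of_ne hW0
  have hWW : 0 < frobInner W W := by rw [← frobNorm_sq_eq]; positivity
  have hMW : frobInner M W = frobInner W W := by
    have h := key W hW.1 (frobInner M W / frobInner W W)
    have h1 : -2 * (frobInner M W / frobInner W W) * frobInner M W
        + (frobInner M W / frobInner W W) ^ 2 * frobInner W W
        = - (frobInner M W ^ 2 / frobInner W W) := by
      field_simp; ring
    rw [h1] at h
    have h2 : frobInner M W ^ 2 / frobInner W W
        ≤ 2 * frobInner M W - frobInner W W := by linarith
    rw [div_le_iff₀ hWW] at h2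
    have h3 : (frobInner M W - frobInner W W) ^ 2 = 0 :=
      le_antisymm (by nlinarith) (sq_nonneg _)
    have h4 := pow_eq_zero_iff (two_ne_zero) |>.1 h3
    linarith
  have hbig : α ^ 2 ≤ frobNorm W ^ 2 := by rw [frobNorm_sq_eq]; linarith
  have hup : l1norm (A W) ≤ β * frobNorm W := (hRIP W (by have := hW.1; omega)).2
  have hl0 : 0 ≤ l1norm (A W) := Finset.sum_nonneg fun i _ => abs_nonneg _
  have hβ : β ≤ γ * α := (div_le_iff₀ hα).1 hratio
  have hmain : (1 / (4 * γ ^ 2)) * l1norm (A W) ^ 2 / frobNorm W ^ 2 ≤ frobNorm W ^ 2 := by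
    rw [div_le_iff₀ (by positivity), one_div, inv_mul_le_iff₀ (by positivity)]
    calc l1norm (A W) ^ 2 ≤ (γ * α * frobNorm W) ^ 2 := by
          apply pow_le_pow_left₀ hl0
          exact hup.trans (mul_le_mul_of_nonneg_right hβ hWp.le)
      _ = γ ^ 2 * (α ^ 2 * frobNorm W ^ 2) := by ring
      _ ≤ γ ^ 2 * (frobNorm W ^ 2 * frobNorm W ^ 2) := by gcongr
      _ ≤ 4 * γ ^ 2 * (frobNorm W ^ 2 * frobNorm W ^ 2) := by
          have : 0 ≤ γ ^ 2 * (frobNorm W ^ 2 * frobNorm W ^ 2) := by positivity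
          linarith
  exact ⟨hW0, hmain, max_eq_left hmain⟩
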